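/- arXiv:2505.19309 — 2 statements merged into one kernel-verified Lean document; each statement's English description precedes it below -/
import Mathlib

section
/- The non-HARA utility U(x) = (1/3)·H(x)^{−3} + H(x)^{−1} + x·H(x) is differentiable on (0,∞) with marginal utility U'(x) = H(x) for every x > 0. -/
open Set Filter

/-!
Put `V y = y⁻³ / 3 + y⁻¹`, so that `U x = V (H x) + x * H x`. Here `V' y = -(y⁻⁴ + y⁻²)`, and `H`
inverts `-V'`: the number `w = H(x)⁻²` is the positive root of `w² + w = x`. Hence `V' (H x) = -x`,
and in `U' = (V' (H x) + x) * H' x + H x` the coefficient of `H'` vanishes (the envelope theorem).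
-/

theorem hasDerivAt_comp_add_mul_of_hasDerivAt_neg {𝕜 : Type*} [NontriviallyNormedField 𝕜]
    {V H : 𝕜 → 𝕜} {x : 𝕜} (hV : HasDerivAt V (-x) (H x)) (hH : DifferentiableAt 𝕜 H x) :
    HasDerivAt (fun t ↦ V (H t) + t * H t) (H x) x :=
  ((hV.comp x hH.hasDerivAt).add ((hasDerivAt_id' x).mul hH.hasDerivAt)).congr_deriv (by ring)

namespace NonHARA

/-- The convex dual `V` of the non-HARA utility, with the Legendre relation
`U x = V (U' x) + x * U' x`. -/
noncomputable def dualUtility (y : ℝ) : ℝ := (1 / 3) * y ^ (-3 : ℤ) + y⁻¹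

theorem hasDerivAt_dualUtility {y : ℝ} (hy : y ≠ 0) :
    HasDerivAt dualUtility (-(y⁻¹ ^ 4 + y⁻¹ ^ 2)) y := by
  have hcube : HasDerivAt (fun z : ℝ ↦ z ^ (-3 : ℤ)) (-3 * y⁻¹ ^ 4) y :=
    (hasDerivAt_zpow (-3) y (.inl hy)).congr_deriv (by simp [zpow_neg, zpow_ofNat])
  exact ((hcube.const_mul (1 / 3)).add (hasDerivAt_inv hy)).congr_deriv (by ring)

/-- The larger root `w` of the quadratic equation `w ^ 2 + w = x`. It is a genuine root only for
`-1 / 4 ≤ x`, since the real square root is `0` at negative numbers. -/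
noncomputable def quadraticRoot (x : ℝ) : ℝ := (-1 + √(1 + 4 * x)) / 2

theorem quadraticRoot_sq_add_self {x : ℝ} (hx : -1 / 4 ≤ x) :
    quadraticRoot x ^ 2 + quadraticRoot x = x := by
  have hsq : √(1 + 4 * x) ^ 2 = 1 + 4 * x := Real.sq_sqrt (by linarith)
  unfold quadraticRoot
  linear_combination hsq / 4

theorem quadraticRoot_pos {x : ℝ} (hx : 0 < x) : 0 < quadraticRoot x := by
  have hsqrt : 1 < √(1 + 4 * x) := Real.lt_sqrt_of_sq_lt (by linarith)
  unfold quadraticRoot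
  linarith

theorem differentiableAt_quadraticRoot {x : ℝ} (hx : -1 / 4 < x) :
    DifferentiableAt ℝ quadraticRoot x := by
  have hdisc : 0 < 1 + 4 * x := by linarith
  have hlinear : DifferentiableAt ℝ (fun t : ℝ ↦ 1 + 4 * t) x := by fun_prop
  exact ((hlinear.sqrt hdisc.ne').const_add (-1)).div_const 2

/-- The marginal utility `H`, written as `w ^ (-1 / 2)` with `w` the root of `w ^ 2 + w = x`. -/
noncomputable def marginalUtility (x : ℝ) : ℝ := √((quadraticRoot x)⁻¹)

theorem marginalUtility_eq_sqrt (x : ℝ) : marginalUtility x = √(2 / (-1 + √(1 + 4 * x))) := by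
  rw [marginalUtility, quadraticRoot, inv_div]

theorem marginalUtility_pos {x : ℝ} (hx : 0 < x) : 0 < marginalUtility x :=
  Real.sqrt_pos.2 (inv_pos.2 (quadraticRoot_pos hx))

theorem inv_marginalUtility_sq {x : ℝ} (hx : 0 < x) :
    (marginalUtility x)⁻¹ ^ 2 = quadraticRoot x := by
  rw [marginalUtility, inv_pow, Real.sq_sqrt (inv_pos.2 (quadraticRoot_pos hx)).le, inv_inv]

theorem inv_marginalUtility_pow_four_add_sq {x : ℝ} (hx : 0 < x) :
    (marginalUtility x)⁻¹ ^ 4 + (marginalUtility x)⁻¹ ^ 2 = x := by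
  calc (marginalUtility x)⁻¹ ^ 4 + (marginalUtility x)⁻¹ ^ 2
      = ((marginalUtility x)⁻¹ ^ 2) ^ 2 + (marginalUtility x)⁻¹ ^ 2 := by ring
    _ = quadraticRoot x ^ 2 + quadraticRoot x := by rw [inv_marginalUtility_sq hx]
    _ = x := quadraticRoot_sq_add_self (by linarith)

theorem differentiableAt_marginalUtility {x : ℝ} (hx : 0 < x) :
    DifferentiableAt ℝ marginalUtility x := by
  have hroot : quadraticRoot x ≠ 0 := (quadraticRoot_pos hx).ne'
  exact ((differentiableAt_quadraticRoot (by linarith)).inv hroot).sqrt (inv_ne_zero hroot)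

theorem hasDerivAt_dualUtility_marginalUtility {x : ℝ} (hx : 0 < x) :
    HasDerivAt dualUtility (-x) (marginalUtility x) := by
  simpa only [inv_marginalUtility_pow_four_add_sq hx] using
    hasDerivAt_dualUtility (marginalUtility_pos hx).ne'

end NonHARA

/-- The non-HARA utility `U(x) = (1/3) H(x)⁻³ + H(x)⁻¹ + x H(x)` is differentiable on
`(0,∞)` with marginal utility `U'(x) = H(x)`. -/
theorem nonHARA_marginal_utility
    (H U : ℝ → ℝ)
    (hH : ∀ x : ℝ, H x = Real.sqrt (2 / (-1 + Real.sqrt (1 + 4 * x))))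
    (hU : ∀ x : ℝ, U x = (1 / 3) * (H x) ^ (-3 : ℤ) + (H x)⁻¹ + x * H x) :
    ∀ x : ℝ, 0 < x → HasDerivAt U (H x) x := by
  intro x hx
  obtain rfl : H = NonHARA.marginalUtility :=
    funext fun t ↦ (hH t).trans (NonHARA.marginalUtility_eq_sqrt t).symm
  obtain rfl : U = fun t ↦
      NonHARA.dualUtility (NonHARA.marginalUtility t) + t * NonHARA.marginalUtility t := funext hU
  exact hasDerivAt_comp_add_mul_of_hasDerivAt_neg
    (NonHARA.hasDerivAt_dualUtility_marginalUtility hx)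
    (NonHARA.differentiableAt_marginalUtility hx)
end

section
/- Let U be a utility function, K > 0, and Ũ_K(y) = sup_{x>K}{U(x−K) − x·y}. Let w : (0,∞) → ℝ be continuously differentiable and strictly convex with w ≥ Ũ_K on (0,∞), −w'(y) → +∞ as y → 0+ and −w'(y) → K̂ ≤ K as y → ∞ for some 0 < K̂ ≤ K. Fix x > K and let y* be the unique root of w'(y) + x = 0 (the minimizer of y ↦ w(y)+x·y). If w(y*) = Ũ_K(y*) (the conjugate point lies in the stopping region), then Ũ_K'(y*) = w'(y*) = −x and inf_{y>0}{ w(y) + x·y } = Ũ_K(y*) + x·y* = U(x − K). -/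
open Set Filter

open scoped Topology

/-!
The dual `Ũ_K` is a supremum of affine functions, hence convex, so it has a supporting line at the
contact point `y*`. As `w ≥ Ũ_K` with equality at `y*`, this line also supports `w` there, so its
slope is `w'(y*) = -x`; squeezed between the line and `w`, `Ũ_K` is differentiable at `y*`.
If `q` is the slope of a line lying above `U(· - K)` and touching it at `x`, then
`Ũ_K(q) + x q = U(x - K)`. Since `y*` minimizes `y ↦ Ũ_K(y) + x y`, this gives
`Ũ_K(y*) + x y* ≤ U(x - K)`, while the reverse inequality is the definition of `Ũ_K`.
-/

section ConvexContact

variable {f w : ℝ → ℝ} {S : Set ℝ} {a d : ℝ}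

theorem exists_affine_le_of_convexOn (hf : ConvexOn ℝ S f) (ha : a ∈ interior S) :
    ∃ m, ∀ y ∈ S, f a + m * (y - a) ≤ f y := by
  refine ⟨derivWithin f (Ioi a) a, fun y hy => ?_⟩
  rcases lt_trichotomy y a with hya | rfl | hay
  · have hslope := (hf.slope_le_leftDeriv_of_mem_interior hy ha hya).trans
      (hf.leftDeriv_le_rightDeriv_of_mem_interior ha)
    rw [slope_def_field, div_le_iff₀ (sub_pos.2 hya)] at hslope
    linarith
  · simp
  · have hslope := hf.rightDeriv_le_slope_of_mem_interior ha hy hay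
    rw [slope_def_field, le_div_iff₀ (sub_pos.2 hay)] at hslope
    linarith

theorem exists_le_affine_of_concaveOn (hf : ConcaveOn ℝ S f) (ha : a ∈ interior S) :
    ∃ m, ∀ y ∈ S, f y ≤ f a + m * (y - a) := by
  obtain ⟨m, hm⟩ := exists_affine_le_of_convexOn hf.neg ha
  refine ⟨-m, fun y hy => ?_⟩
  have := hm y hy
  simp only [Pi.neg_apply] at this
  linarith

theorem slope_eq_of_affine_le_of_hasDerivAt {m : ℝ} (hw : HasDerivAt w d a)
    (hle : ∀ᶠ y in 𝓝 a, w a + m * (y - a) ≤ w y) : m = d := by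
  have hmin : IsLocalMin (fun y => w y - m * y) a := by
    filter_upwards [hle] with y hy
    linarith
  have hzero := hmin.hasDerivAt_eq_zero (hw.sub ((hasDerivAt_id a).const_mul m))
  linarith

theorem affine_le_of_convexOn_of_contact (hf : ConvexOn ℝ S f) (ha : a ∈ interior S)
    (hw : HasDerivAt w d a) (hfw : ∀ᶠ y in 𝓝 a, f y ≤ w y) (heq : w a = f a) :
    ∀ y ∈ S, f a + d * (y - a) ≤ f y := by
  obtain ⟨m, hm⟩ := exists_affine_le_of_convexOn hf ha
  have hmd : m = d := by
    refine slope_eq_of_affine_le_of_hasDerivAt hw ?_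
    filter_upwards [hfw, mem_interior_iff_mem_nhds.1 ha] with y hy hyS
    exact heq ▸ (hm y hyS).trans hy
  exact hmd ▸ hm

theorem hasDerivAt_of_affine_le_of_le (hw : HasDerivAt w d a)
    (hlow : ∀ᶠ y in 𝓝 a, f a + d * (y - a) ≤ f y) (hfw : ∀ᶠ y in 𝓝 a, f y ≤ w y)
    (heq : w a = f a) : HasDerivAt f d a := by
  rw [hasDerivAt_iff_isLittleO] at hw ⊢
  refine (Asymptotics.IsBigO.of_bound' ?_).trans_isLittleO hw
  filter_upwards [hlow, hfw] with y hlow hfw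
  rw [smul_eq_mul, mul_comm, heq]
  exact abs_le_abs_of_nonneg (by linarith) (by linarith)

end ConvexContact

section Dual

variable {s : Set ℝ} {g : ℝ → ℝ} {x y : ℝ}

/-- The dual of `g` over `s`, i.e. `y ↦ sup_{x ∈ s} (g x - x * y)`, in the sign convention of
utility maximization: it is the convex conjugate of `-g` at `-y`. The value is meaningful only for
`y ∈ dualDomain s g`, since `sSup` of an unbounded set of reals is `0`. -/
noncomputable def dualFunction (s : Set ℝ) (g : ℝ → ℝ) (y : ℝ) : ℝ :=
  sSup {v | ∃ x, x ∈ s ∧ v = g x - x * y}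

/-- The effective domain of the dual of `g` over `s`: the `y` at which the supremum defining
`dualFunction s g y` is not `+∞`. -/
def dualDomain (s : Set ℝ) (g : ℝ → ℝ) : Set ℝ :=
  {y | BddAbove {v | ∃ x, x ∈ s ∧ v = g x - x * y}}

theorem mem_dualDomain_of_le {B : ℝ} (hB : ∀ x ∈ s, g x - x * y ≤ B) : y ∈ dualDomain s g :=
  ⟨B, by rintro _ ⟨x, hx, rfl⟩; exact hB x hx⟩

theorem le_dualFunction (hy : y ∈ dualDomain s g) (hx : x ∈ s) :
    g x - x * y ≤ dualFunction s g y :=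
  le_csSup hy ⟨x, hx, rfl⟩

theorem dualFunction_le {B : ℝ} (hs : s.Nonempty) (hB : ∀ x ∈ s, g x - x * y ≤ B) :
    dualFunction s g y ≤ B := by
  obtain ⟨x, hx⟩ := hs
  refine csSup_le ⟨_, x, hx, rfl⟩ ?_
  rintro _ ⟨z, hz, rfl⟩
  exact hB z hz

theorem convexOn_dualFunction (hs : s.Nonempty) :
    ConvexOn ℝ (dualDomain s g) (dualFunction s g) := by
  have hbound : ∀ y₁ ∈ dualDomain s g, ∀ y₂ ∈ dualDomain s g, ∀ a b : ℝ, 0 ≤ a → 0 ≤ b →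
      a + b = 1 → ∀ x ∈ s,
      g x - x * (a • y₁ + b • y₂) ≤ a • dualFunction s g y₁ + b • dualFunction s g y₂ := by
    intro y₁ hy₁ y₂ hy₂ a b ha hb hab x hx
    calc g x - x * (a • y₁ + b • y₂)
        = a • (g x - x * y₁) + b • (g x - x * y₂) := by
          simp only [smul_eq_mul]
          linear_combination (-g x) * hab
      _ ≤ a • dualFunction s g y₁ + b • dualFunction s g y₂ := by
          gcongr <;> exact le_dualFunction ‹_› hx
  exact ⟨fun y₁ hy₁ y₂ hy₂ a b ha hb hab =>
      mem_dualDomain_of_le (hbound y₁ hy₁ y₂ hy₂ a b ha hb hab),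
    fun y₁ hy₁ y₂ hy₂ a b ha hb hab => dualFunction_le hs (hbound y₁ hy₁ y₂ hy₂ a b ha hb hab)⟩

theorem dualFunction_add_mul_eq_of_affine_le (hg : ConcaveOn ℝ s g) (hx : x ∈ interior s)
    (hy : y ∈ dualDomain s g)
    (hsub : ∀ z ∈ dualDomain s g, dualFunction s g y + -x * (z - y) ≤ dualFunction s g z) :
    dualFunction s g y + x * y = g x := by
  have hxs : x ∈ s := interior_subset hx
  obtain ⟨q, hq⟩ := exists_le_affine_of_concaveOn hg hx
  have hqle : ∀ z ∈ s, g z - z * q ≤ g x - x * q := fun z hz => by linarith [hq z hz]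
  have hdual_q : dualFunction s g q ≤ g x - x * q := dualFunction_le ⟨x, hxs⟩ hqle
  have hsub_q := hsub q (mem_dualDomain_of_le hqle)
  have hyoung := le_dualFunction hy hxs
  linarith

end Dual

section Growth

variable {U : ℝ → ℝ} {C p : ℝ}

theorem exists_forall_rpow_le_mul_add {ε : ℝ} (hp0 : 0 ≤ p) (hp1 : p < 1) (hε : 0 < ε) :
    ∃ M, ∀ t : ℝ, 0 < t → t ^ p ≤ ε * t + M := by
  have hdecay : ∀ᶠ t : ℝ in atTop, t ^ (-(1 - p)) ≤ ε :=
    (tendsto_rpow_neg_atTop (sub_pos.2 hp1)).eventually_le_const hε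
  obtain ⟨T, hT⟩ := eventually_atTop.1 hdecay
  refine ⟨|T| ^ p, fun t ht => ?_⟩
  rcases le_total T t with hTt | htT
  · calc t ^ p = t ^ (-(1 - p)) * t := by
          rw [← Real.rpow_add_one ht.ne']
          ring_nf
      _ ≤ ε * t := by gcongr; exact hT t hTt
      _ ≤ ε * t + |T| ^ p := le_add_of_nonneg_right (by positivity)
  · calc t ^ p ≤ |T| ^ p := by gcongr; exact htT.trans (le_abs_self T)
      _ ≤ ε * t + |T| ^ p := le_add_of_nonneg_left (by positivity)

theorem Ioi_subset_dualDomain_of_rpow_growth (K : ℝ) (hC : 0 < C) (hp0 : 0 ≤ p) (hp1 : p < 1)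
    (hgrowth : ∀ t : ℝ, 0 < t → U t ≤ C * (1 + t ^ p)) :
    Ioi 0 ⊆ dualDomain (Ioi K) (fun z => U (z - K)) := by
  intro y (hy : 0 < y)
  obtain ⟨M, hM⟩ := exists_forall_rpow_le_mul_add hp0 hp1 (div_pos hy hC)
  refine mem_dualDomain_of_le (B := C * (1 + M) - K * y) fun z hz => ?_
  have hzK : 0 < z - K := sub_pos.2 hz
  have hUle : U (z - K) ≤ y * (z - K) + C * (1 + M) :=
    calc U (z - K) ≤ C * (1 + (z - K) ^ p) := hgrowth _ hzK
      _ ≤ C * (1 + (y / C * (z - K) + M)) := by gcongr; exact hM _ hzK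
      _ = y * (z - K) + C * (1 + M) := by field_simp; ring
  linarith

end Growth

theorem stopping_region_contact_general {U w : ℝ → ℝ} {K x y₀ : ℝ}
    (hU : ConcaveOn ℝ (Ioi 0) U)
    (hfin : Ioi 0 ⊆ dualDomain (Ioi K) (fun z => U (z - K)))
    (hdom : ∀ y, 0 < y → dualFunction (Ioi K) (fun z => U (z - K)) y ≤ w y)
    (hx : K < x) (hy₀ : 0 < y₀) (hw : HasDerivAt w (-x) y₀)
    (hcontact : w y₀ = dualFunction (Ioi K) (fun z => U (z - K)) y₀) :
    HasDerivAt (dualFunction (Ioi K) (fun z => U (z - K))) (-x) y₀ ∧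
    IsLeast {v | ∃ y, 0 < y ∧ v = w y + x * y}
      (dualFunction (Ioi K) (fun z => U (z - K)) y₀ + x * y₀) ∧
    dualFunction (Ioi K) (fun z => U (z - K)) y₀ + x * y₀ = U (x - K) := by
  set D := dualFunction (Ioi K) (fun z => U (z - K))
  have hshift : ConcaveOn ℝ (Ioi K) (fun z => U (z - K)) := by
    simpa [Function.comp_def, ← sub_eq_add_neg] using hU.translate_left (-K)
  have hpos : ∀ᶠ y in 𝓝 y₀, 0 < y := eventually_gt_nhds hy₀
  have hDw : ∀ᶠ y in 𝓝 y₀, D y ≤ w y := hpos.mono hdom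
  have hsub : ∀ y ∈ dualDomain (Ioi K) (fun z => U (z - K)), D y₀ + -x * (y - y₀) ≤ D y :=
    affine_le_of_convexOn_of_contact (convexOn_dualFunction ⟨x, hx⟩)
      (interior_maximal hfin isOpen_Ioi hy₀) hw hDw hcontact
  refine ⟨hasDerivAt_of_affine_le_of_le hw (hpos.mono fun y hy => hsub y (hfin hy)) hDw hcontact,
    ⟨⟨y₀, hy₀, by rw [hcontact]⟩, ?_⟩,
    dualFunction_add_mul_eq_of_affine_le hshift (by rwa [interior_Ioi]) (hfin hy₀) hsub⟩
  rintro _ ⟨y, hy, rfl⟩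
  linarith [hsub y (hfin hy), hdom y hy]

/-- In the stopping region: if the conjugate point `y*` of `w` satisfies `w(y*) = Ũ_K(y*)`,
then `Ũ_K'(y*) = w'(y*) = -x` and `inf_{y>0} { w(y) + x*y } = Ũ_K(y*) + x*y* = U(x - K)`. -/
theorem stopping_region_contact
    (U : ℝ → ℝ) (C p K Khat : ℝ)
    (hK : 0 < K)
    (hU0 : U 0 = 0)
    (hUcont : ContinuousOn U (Ici 0))
    (hUC2 : ContDiffOn ℝ 2 U (Ioi 0))
    (hUmono : StrictMonoOn U (Ici 0))
    (hUconc : StrictConcaveOn ℝ (Ici 0) U)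
    (hUinf : Tendsto U atTop atTop)
    (hU'0 : Tendsto (deriv U) (nhdsWithin 0 (Ioi 0)) atTop)
    (hU'inf : Tendsto (deriv U) atTop (nhds 0))
    (hC : 0 < C) (hp0 : 0 < p) (hp1 : p < 1)
    (hgrowth : ∀ x : ℝ, 0 ≤ x → U x ≤ C * (1 + x ^ p))
    (UK : ℝ → ℝ)
    (hUK : ∀ y : ℝ, UK y = sSup {v : ℝ | ∃ x : ℝ, K < x ∧ v = U (x - K) - x * y})
    (w w' : ℝ → ℝ)
    (hw' : ∀ y : ℝ, 0 < y → HasDerivAt w (w' y) y)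
    (hw'cont : ContinuousOn w' (Ioi 0))
    (hconv : StrictConvexOn ℝ (Ioi 0) w)
    (hdom : ∀ y : ℝ, 0 < y → UK y ≤ w y)
    (hKhat0 : 0 < Khat) (hKhatK : Khat ≤ K)
    (hlim0 : Tendsto (fun y => -(w' y)) (nhdsWithin 0 (Ioi 0)) atTop)
    (hlimtop : Tendsto (fun y => -(w' y)) atTop (nhds Khat))
    (x : ℝ) (hx : K < x)
    (ystar : ℝ) (hystar : 0 < ystar) (hroot : w' ystar + x = 0)
    (hcontact : w ystar = UK ystar) :
    deriv UK ystar = w' ystar ∧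
    w' ystar = -x ∧
    sInf {v : ℝ | ∃ y : ℝ, 0 < y ∧ v = w y + x * y} = UK ystar + x * ystar ∧
    UK ystar + x * ystar = U (x - K) := by
  have hw'x : w' ystar = -x := eq_neg_of_add_eq_zero_left hroot
  obtain rfl : UK = dualFunction (Ioi K) (fun z => U (z - K)) := funext hUK
  obtain ⟨hderiv, hleast, hvalue⟩ := stopping_region_contact_general
    (hUconc.concaveOn.subset Ioi_subset_Ici_self (convex_Ioi 0))
    (Ioi_subset_dualDomain_of_rpow_growth K hC hp0.le hp1 fun t ht => hgrowth t ht.le)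
    hdom hx hystar (hw'x ▸ hw' ystar hystar) hcontact
  exact ⟨hderiv.deriv.trans hw'x.symm, hw'x, hleast.csInf_eq, hvalue⟩
end
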